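/- The set of m×m positive definite complex matrices equipped with the Riemannian metric δ is a complete metric space: every δ-Cauchy sequence of positive definite matrices converges in δ to a positive definite matrix. -/

import Mathlib

/-!
Completeness is transferred from Thompson's metric, whose closed balls are order intervals. Writing
`λᵢ` for the eigenvalues of `A^{-1/2} B A^{-1/2}`, one has `δ(A, B)² = ∑ (log λᵢ)²`, while
congruence by `A^{1/2}` shows that `e^{-ε} A ≤ B ≤ e^ε A` holds exactly when every `|log λᵢ|` is at
most `ε`. A `δ`-Cauchy sequence is therefore eventually trapped in an order interval. Order
intervals of matrices are compact, so the sequence has a cluster point `L`, and because they are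
closed the inequalities `e^{-ε} u p ≤ u q ≤ e^ε u p` persist when `u q` is replaced by `L`. The
lower one makes `L` positive definite, and both together bound `δ(u p, L)` by `√m ε`. No triangle
inequality for `δ` is needed.
-/

open Matrix
open scoped ComplexOrder

noncomputable def matFun {m : ℕ} (f : ℝ → ℝ) (A : Matrix (Fin m) (Fin m) ℂ) :
    Matrix (Fin m) (Fin m) ℂ :=
  if hA : A.IsHermitian then
    (hA.eigenvectorUnitary : Matrix (Fin m) (Fin m) ℂ) *
      Matrix.diagonal (fun i => (f (hA.eigenvalues i) : ℂ)) *
      (star (hA.eigenvectorUnitary : Matrix (Fin m) (Fin m) ℂ))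
  else 0

/-- The unique positive definite square root of a positive definite matrix
(realized via the spectral decomposition). -/
noncomputable def msqrt {m : ℕ} (A : Matrix (Fin m) (Fin m) ℂ) : Matrix (Fin m) (Fin m) ℂ :=
  matFun Real.sqrt A

/-- The logarithm of a positive definite matrix: the unique Hermitian `L` with `exp L = A`. -/
noncomputable def mlog {m : ℕ} (A : Matrix (Fin m) (Fin m) ℂ) : Matrix (Fin m) (Fin m) ℂ :=
  matFun Real.log A

/-- The real power `A ^ t` of a positive definite matrix, via the spectral decomposition. -/
noncomputable def mpow {m : ℕ} (A : Matrix (Fin m) (Fin m) ℂ) (t : ℝ) : Matrix (Fin m) (Fin m) ℂ :=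
  matFun (fun x => x ^ t) A

/-- The matrix geometric mean `A # B`. -/
noncomputable def gmean {m : ℕ} (A B : Matrix (Fin m) (Fin m) ℂ) : Matrix (Fin m) (Fin m) ℂ :=
  msqrt A * msqrt ((msqrt A)⁻¹ * B * (msqrt A)⁻¹) * msqrt A

/-- The weighted geometric mean `A #_t B`. -/
noncomputable def wgmean {m : ℕ} (A B : Matrix (Fin m) (Fin m) ℂ) (t : ℝ) :
    Matrix (Fin m) (Fin m) ℂ :=
  msqrt A * mpow ((msqrt A)⁻¹ * B * (msqrt A)⁻¹) t * msqrt A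

/-- The Frobenius (Hilbert–Schmidt) norm `‖X‖₂ = (Tr(X*X))^{1/2}`. -/
noncomputable def fnorm {m : ℕ} (X : Matrix (Fin m) (Fin m) ℂ) : ℝ :=
  Real.sqrt ((Xᴴ * X).trace.re)

/-- The Riemannian metric `δ(A,B) = ‖log(A^{-1/2} B A^{-1/2})‖₂`. -/
noncomputable def rdist {m : ℕ} (A B : Matrix (Fin m) (Fin m) ℂ) : ℝ :=
  fnorm (mlog ((msqrt A)⁻¹ * B * (msqrt A)⁻¹))

/-- The Loewner order: `A ≤ B` iff `B - A` is positive semidefinite. -/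
def Loewner {m : ℕ} (A B : Matrix (Fin m) (Fin m) ℂ) : Prop :=
  (B - A).PosSemidef

section ThompsonBall

/-- The closed ball of radius `ε` around `a` for Thompson's metric on the cone of strictly positive
elements, `d(a, b) = inf {ε | e^{-ε} a ≤ b ≤ e^ε a}`. It is defined as an order interval, so that
no metric has to be introduced. -/
def thompsonClosedBall {E : Type*} [Preorder E] [SMul ℝ E] (a : E) (ε : ℝ) : Set E :=
  Set.Icc (Real.exp (-ε) • a) (Real.exp ε • a)

theorem exists_eventually_mem_thompsonClosedBall {ι E : Type*} [TopologicalSpace E] [Preorder E]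
    [OrderClosedTopology E] [CompactIccSpace E] [SMul ℝ E] {l : Filter ι} [l.NeBot] {u : ι → E}
    (hu : ∀ ε : ℝ, 0 < ε → ∀ᶠ p in l, ∀ᶠ q in l, u q ∈ thompsonClosedBall (u p) ε) :
    ∃ b, ∀ ε : ℝ, 0 < ε → ∀ᶠ p in l, b ∈ thompsonClosedBall (u p) ε := by
  obtain ⟨p₀, hp₀⟩ := (hu 1 one_pos).exists
  obtain ⟨b, -, hb⟩ := isCompact_Icc.exists_mapClusterPt (Filter.tendsto_principal.2 hp₀)
  exact ⟨b, fun ε hε => (hu ε hε).mono fun p hp => isClosed_Icc.mem_of_mapClusterPt hb hp⟩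

theorem star_mul_mul_mem_thompsonClosedBall_iff {A : Type*} [Ring A] [StarRing A] [PartialOrder A]
    [StarOrderedRing A] [Algebra ℝ A] {s : A} (hs : IsUnit s) {a b : A} {ε : ℝ} :
    star s * b * s ∈ thompsonClosedBall (star s * a * s) ε ↔ b ∈ thompsonClosedBall a ε := by
  have conj_le_conj_iff (x y : A) : star s * x * s ≤ star s * y * s ↔ x ≤ y := by
    rw [← sub_nonneg, ← sub_mul, ← mul_sub, hs.star_left_conjugate_nonneg_iff, sub_nonneg]
  have smul_conj (r : ℝ) (x : A) : r • (star s * x * s) = star s * (r • x) * s := by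
    rw [mul_smul_comm, smul_mul_assoc]
  simp only [thompsonClosedBall, Set.mem_Icc, smul_conj, conj_le_conj_iff]

end ThompsonBall

section CStarAlgebra

variable {A : Type*} [CStarAlgebra A] [PartialOrder A] [StarOrderedRing A]

theorem mem_thompsonClosedBall_one_iff {a : A} (ha : IsStrictlyPositive a) {ε : ℝ} :
    a ∈ thompsonClosedBall 1 ε ↔ ∀ x ∈ spectrum ℝ a, |Real.log x| ≤ ε := by
  have hsa : IsSelfAdjoint a := ha.isSelfAdjoint
  rw [thompsonClosedBall, Set.mem_Icc, ← Algebra.algebraMap_eq_smul_one,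
    ← Algebra.algebraMap_eq_smul_one, algebraMap_le_iff_le_spectrum hsa,
    le_algebraMap_iff_spectrum_le hsa, ← forall₂_and]
  refine forall₂_congr fun x hx => ?_
  have hx₀ : 0 < x := ha.spectrum_pos hx
  rw [abs_le, Real.le_log_iff_exp_le hx₀, Real.log_le_iff_le_exp hx₀]

theorem isStrictlyPositive_of_mem_thompsonClosedBall {a b : A} {ε : ℝ} (ha : IsStrictlyPositive a)
    (hb : b ∈ thompsonClosedBall a ε) : IsStrictlyPositive b :=
  (ha.smul (Real.exp_pos _)).of_le hb.1

theorem compactIccSpace_of_properSpace [ProperSpace A] : CompactIccSpace A where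
  isCompact_Icc {a b} := by
    refine Metric.isCompact_of_isClosed_isBounded isClosed_Icc ?_
    refine Metric.isBounded_closedBall (x := a) (r := ‖b - a‖) |>.subset fun x hx => ?_
    rw [mem_closedBall_iff_norm]
    exact CStarAlgebra.norm_le_norm_of_nonneg_of_le (sub_nonneg.2 hx.1) (sub_le_sub_right hx.2 a)

end CStarAlgebra

section FunctionalCalculus

theorem trace_cfc {n 𝕜 : Type*} [RCLike 𝕜] [Fintype n] [DecidableEq n] {A : Matrix n n 𝕜}
    (hA : A.IsHermitian) (f : ℝ → ℝ) :
    (cfc f A).trace = ∑ i, (f (hA.eigenvalues i) : 𝕜) := by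
  rw [hA.cfc_eq, IsHermitian.cfc, Unitary.conjStarAlgAut_apply, trace_mul_cycle,
    Unitary.coe_star_mul_self, one_mul, trace_diagonal]
  rfl

variable {m : ℕ} {A : Matrix (Fin m) (Fin m) ℂ}

theorem matFun_eq_cfc (hA : A.IsHermitian) (f : ℝ → ℝ) : matFun f A = cfc f A := by
  rw [matFun, dif_pos hA, hA.cfc_eq, IsHermitian.cfc, Unitary.conjStarAlgAut_apply]
  rfl

theorem fnorm_cfc (hA : A.IsHermitian) (f : ℝ → ℝ) :
    fnorm (cfc f A) = √(∑ i, f (hA.eigenvalues i) ^ 2) := by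
  have hf : IsSelfAdjoint (cfc f A) := cfc_predicate f A
  have hcont : ContinuousOn f (spectrum ℝ A) := A.finite_real_spectrum.continuousOn f
  rw [fnorm, ← star_eq_conjTranspose, hf.star_eq, ← cfc_mul f f A, trace_cfc hA]
  simp [sq]

theorem abs_le_fnorm_cfc (hA : A.IsHermitian) (f : ℝ → ℝ) {x : ℝ} (hx : x ∈ spectrum ℝ A) :
    |f x| ≤ fnorm (cfc f A) := by
  rw [hA.spectrum_real_eq_range_eigenvalues] at hx
  obtain ⟨i, rfl⟩ := hx
  rw [fnorm_cfc hA]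
  refine Real.abs_le_sqrt (Finset.single_le_sum (f := fun j => f (hA.eigenvalues j) ^ 2) ?_ ?_)
  · exact fun j _ => sq_nonneg _
  · exact Finset.mem_univ i

theorem fnorm_cfc_le (hA : A.IsHermitian) {f : ℝ → ℝ} {c : ℝ} (hc : 0 ≤ c)
    (hf : ∀ x ∈ spectrum ℝ A, |f x| ≤ c) : fnorm (cfc f A) ≤ √m * c := by
  have hsq (i : Fin m) : f (hA.eigenvalues i) ^ 2 ≤ c ^ 2 :=
    sq_le_sq.2 ((hf _ (hA.eigenvalues_mem_spectrum_real i)).trans (le_abs_self c))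
  calc fnorm (cfc f A) = √(∑ i, f (hA.eigenvalues i) ^ 2) := fnorm_cfc hA f
    _ ≤ √(∑ _ : Fin m, c ^ 2) := Real.sqrt_le_sqrt (Finset.sum_le_sum fun i _ => hsq i)
    _ = √m * c := by simp [Real.sqrt_sq hc]

end FunctionalCalculus

section RiemannianMetric

open scoped MatrixOrder Matrix.Norms.L2Operator

variable {m : ℕ} {A B : Matrix (Fin m) (Fin m) ℂ} {ε : ℝ}

theorem msqrt_eq_sqrt (hA : A.PosSemidef) : msqrt A = CFC.sqrt A := by
  rw [msqrt, matFun_eq_cfc hA.isHermitian, CFC.sqrt_eq_real_sqrt A hA.nonneg, cfcₙ_eq_cfc]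

theorem msqrt_mul_self (hA : A.PosSemidef) : msqrt A * msqrt A = A := by
  rw [msqrt_eq_sqrt hA, CFC.sqrt_mul_sqrt_self A hA.nonneg]

theorem posDef_msqrt (hA : A.PosDef) : (msqrt A).PosDef := by
  rw [msqrt_eq_sqrt hA.posSemidef]
  exact hA.isStrictlyPositive.sqrt.posDef

theorem posDef_inv_msqrt_mul_mul (hA : A.PosDef) (hB : B.PosDef) :
    ((msqrt A)⁻¹ * B * (msqrt A)⁻¹).PosDef := by
  have hS : (msqrt A)⁻¹.PosDef := (posDef_msqrt hA).inv
  exact (hB.isStrictlyPositive.conjugate_of_isUnit_of_isSelfAdjoint _ _ hS.isUnit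
    hS.isHermitian).posDef

theorem mem_thompsonClosedBall_iff (hA : A.PosDef) (hB : B.PosDef) :
    B ∈ thompsonClosedBall A ε ↔
      ∀ x ∈ spectrum ℝ ((msqrt A)⁻¹ * B * (msqrt A)⁻¹), |Real.log x| ≤ ε := by
  have hS : (msqrt A).PosDef := posDef_msqrt hA
  have hstar : star (msqrt A) = msqrt A := hS.isHermitian
  have hdet : IsUnit (msqrt A).det := (isUnit_iff_isUnit_det _).1 hS.isUnit
  have conj_one : star (msqrt A) * 1 * msqrt A = A := by
    rw [mul_one, hstar, msqrt_mul_self hA.posSemidef]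
  have conj_inv_conj : star (msqrt A) * ((msqrt A)⁻¹ * B * (msqrt A)⁻¹) * msqrt A = B := by
    rw [hstar, Matrix.mul_assoc, nonsing_inv_mul_cancel_right _ _ hdet,
      mul_nonsing_inv_cancel_left _ _ hdet]
  have hC : IsStrictlyPositive ((msqrt A)⁻¹ * B * (msqrt A)⁻¹) :=
    (posDef_inv_msqrt_mul_mul hA hB).isStrictlyPositive
  rw [← mem_thompsonClosedBall_one_iff hC,
    ← star_mul_mul_mem_thompsonClosedBall_iff hS.isUnit (a := 1), conj_one, conj_inv_conj]

theorem rdist_eq_fnorm_cfc (hA : A.PosDef) (hB : B.PosDef) :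
    rdist A B = fnorm (cfc Real.log ((msqrt A)⁻¹ * B * (msqrt A)⁻¹)) := by
  rw [rdist, mlog, matFun_eq_cfc (posDef_inv_msqrt_mul_mul hA hB).isHermitian]

theorem mem_thompsonClosedBall_of_rdist_le (hA : A.PosDef) (hB : B.PosDef) (h : rdist A B ≤ ε) :
    B ∈ thompsonClosedBall A ε := by
  rw [rdist_eq_fnorm_cfc hA hB] at h
  exact (mem_thompsonClosedBall_iff hA hB).2 fun x hx =>
    (abs_le_fnorm_cfc (posDef_inv_msqrt_mul_mul hA hB).isHermitian Real.log hx).trans h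

theorem rdist_le_of_mem_thompsonClosedBall (hA : A.PosDef) (hB : B.PosDef) (hε : 0 ≤ ε)
    (h : B ∈ thompsonClosedBall A ε) : rdist A B ≤ √m * ε := by
  rw [rdist_eq_fnorm_cfc hA hB]
  exact fnorm_cfc_le (posDef_inv_msqrt_mul_mul hA hB).isHermitian hε
    ((mem_thompsonClosedBall_iff hA hB).1 h)

theorem exists_posDef_eventually_mem_thompsonClosedBall {ι : Type*} {l : Filter ι} [l.NeBot]
    {u : ι → Matrix (Fin m) (Fin m) ℂ} (hpos : ∀ p, (u p).PosDef)
    (hu : ∀ ε : ℝ, 0 < ε → ∀ᶠ p in l, ∀ᶠ q in l, u q ∈ thompsonClosedBall (u p) ε) :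
    ∃ L : Matrix (Fin m) (Fin m) ℂ, L.PosDef ∧
      ∀ ε : ℝ, 0 < ε → ∀ᶠ p in l, L ∈ thompsonClosedBall (u p) ε := by
  have : ProperSpace (Matrix (Fin m) (Fin m) ℂ) := FiniteDimensional.proper ℂ _
  have : CompactIccSpace (Matrix (Fin m) (Fin m) ℂ) := compactIccSpace_of_properSpace
  obtain ⟨L, hL⟩ := exists_eventually_mem_thompsonClosedBall hu
  obtain ⟨p, hp⟩ := (hL 1 one_pos).exists
  have hLpos : IsStrictlyPositive L :=
    isStrictlyPositive_of_mem_thompsonClosedBall (hpos p).isStrictlyPositive hp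
  exact ⟨L, hLpos.posDef, hL⟩

theorem rdist_complete_general {ι : Type*} {l : Filter ι} [l.NeBot]
    {u : ι → Matrix (Fin m) (Fin m) ℂ} (hu : ∀ n, (u n).PosDef)
    (hcauchy : ∀ ε : ℝ, 0 < ε → ∀ᶠ p in l, ∀ᶠ q in l, rdist (u p) (u q) < ε) :
    ∃ L : Matrix (Fin m) (Fin m) ℂ, L.PosDef ∧
      Filter.Tendsto (fun n => rdist (u n) L) l (nhds 0) := by
  obtain ⟨L, hL, hlim⟩ := exists_posDef_eventually_mem_thompsonClosedBall hu fun ε hε =>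
    (hcauchy ε hε).mono fun p hp => hp.mono fun q hpq =>
      mem_thompsonClosedBall_of_rdist_le (hu p) (hu q) hpq.le
  refine ⟨L, hL, tendsto_order.2 ⟨fun a ha => ?_, fun ε hε => ?_⟩⟩
  · exact Filter.Eventually.of_forall fun n => ha.trans_le (Real.sqrt_nonneg _)
  · obtain ⟨c, hc, hcε⟩ := exists_pos_mul_lt hε √m
    filter_upwards [hlim c hc] with n hn
    exact (rdist_le_of_mem_thompsonClosedBall (hu n) hL hc.le hn).trans_lt hcε

end RiemannianMetric

/-- `(𝓟, δ)` is a complete metric space: every `δ`-Cauchy sequence of positive definite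
matrices converges in `δ` to a positive definite matrix. -/
theorem rdist_complete {m : ℕ} (u : ℕ → Matrix (Fin m) (Fin m) ℂ)
    (hu : ∀ n, (u n).PosDef)
    (hcauchy : ∀ ε : ℝ, 0 < ε → ∃ N : ℕ, ∀ p q : ℕ, N ≤ p → N ≤ q → rdist (u p) (u q) < ε) :
    ∃ L : Matrix (Fin m) (Fin m) ℂ, L.PosDef ∧
      Filter.Tendsto (fun n => rdist (u n) L) Filter.atTop (nhds 0) := by
  refine rdist_complete_general hu fun ε hε => ?_
  obtain ⟨N, hN⟩ := hcauchy ε hε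
  filter_upwards [Filter.eventually_ge_atTop N] with p hp
  filter_upwards [Filter.eventually_ge_atTop N] with q hq using hN p q hp hq
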